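/- Let π† be a probability measure on A, let θ : D → ℝ be bounded measurable, let B ⊆ D be measurable with (π†·Q)(B) > 0, and for y ∈ ℝ define θ_y(d) := θ(d)·1_{Bᶜ}(d) + y·1_B(d). Set γ := (1/(π†·Q)(B)) · ∫_{A×B} Φ(a) d(π†⊙Q)(a,d). Then for all y, z ∈ ℝ: Er(θ_y, π†) − Er(θ_z, π†) = [ (y − γ)² − (z − γ)² ] · (π†·Q)(B). -/

import Mathlib

open MeasureTheory ProbabilityTheory

/-- The joint distribution `π ⊙ Q` of `(a, d)` where `a ∼ π` and `d ∼ Q a`. -/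
noncomputable def jointM {A D : Type*} [MeasurableSpace A] [MeasurableSpace D]
    (π : Measure A) (Q : Kernel A D) : Measure (A × D) :=
  π.compProd Q

/-- The data distribution `π · Q`, the marginal of `π ⊙ Q` on `D` (equivalently `π.bind Q`). -/
noncomputable def dataM {A D : Type*} [MeasurableSpace A] [MeasurableSpace D]
    (π : Measure A) (Q : Kernel A D) : Measure D :=
  π.bind (fun a => Q a)

/-- The Bayes risk `Er(θ, π)` of an estimator `θ` for the quantity of interest `Φ`
under the prior `π`, for the quadratic loss. -/
noncomputable def bayesRisk {A D : Type*} [MeasurableSpace A] [MeasurableSpace D]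
    (Q : Kernel A D) (Φ : A → ℝ) (θ : D → ℝ) (π : Measure A) : ℝ :=
  ∫ p, (θ p.2 - Φ p.1) ^ 2 ∂(jointM π Q)

/-- `Θ(π)`: the set of bounded measurable functions `θ : D → ℝ` which are versions of the
conditional expectation of `(a, d) ↦ Φ a` given the second coordinate, under `π ⊙ Q`. -/
def Posterior {A D : Type*} [MeasurableSpace A] [MeasurableSpace D]
    (Q : Kernel A D) (Φ : A → ℝ) (π : Measure A) : Set (D → ℝ) :=
  {θ | Measurable θ ∧ (∃ C, ∀ d, |θ d| ≤ C) ∧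
    ∀ B : Set D, MeasurableSet B →
      ∫ p in Set.univ ×ˢ B, Φ p.1 ∂(jointM π Q) = ∫ d in B, θ d ∂(dataM π Q)}

/-!
Resetting an estimator to a constant `c` on `B` leaves its risk off `B` alone, and on `B` the
bias–variance decomposition splits the risk into `(c - γ) ^ 2 * (π · Q) B` and the integral of
`(Φ - γ) ^ 2`, where `γ` is the mean of `Φ` over `B`. Only the bias term depends on `c`, so
everything else cancels in the difference of two such risks.
-/

section MeanSquare

variable {Ω : Type*} [MeasurableSpace Ω] {μ : Measure Ω} {f g : Ω → ℝ}

theorem memLp_comp_of_bounded {X E : Type*} [MeasurableSpace X] [NormedAddCommGroup E]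
    [IsFiniteMeasure μ] {φ : X → E} (hφ : StronglyMeasurable φ) (hbdd : ∃ C, ∀ x, ‖φ x‖ ≤ C)
    {T : Ω → X} (hT : Measurable T) (p : ENNReal) : MemLp (fun ω => φ (T ω)) p μ := by
  obtain ⟨C, hC⟩ := hbdd
  exact .of_bound (hφ.comp_measurable hT).aestronglyMeasurable C (.of_forall fun ω => hC (T ω))

theorem integral_sq_const_sub_eq_bias_add_variance [IsFiniteMeasure μ] (hf : MemLp f 2 μ) (c : ℝ) :
    ∫ ω, (c - f ω) ^ 2 ∂μ
      = (c - ⨍ ω, f ω ∂μ) ^ 2 * μ.real Set.univ + ∫ ω, (f ω - ⨍ ω, f ω ∂μ) ^ 2 ∂μ := by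
  set m := ⨍ ω, f ω ∂μ with hm
  have hdev : MemLp (fun ω => f ω - m) 2 μ := hf.sub (memLp_const m)
  have hcross_int : Integrable (fun ω => 2 * (c - m) * (f ω - m)) μ :=
    (hdev.integrable one_le_two).const_mul _
  have hlin_int : Integrable (fun ω => (c - m) ^ 2 - 2 * (c - m) * (f ω - m)) μ :=
    (integrable_const _).sub hcross_int
  have hcross : ∫ ω, 2 * (c - m) * (f ω - m) ∂μ = 0 := by
    rw [integral_const_mul, hm, integral_sub_average, mul_zero]
  calc ∫ ω, (c - f ω) ^ 2 ∂μ
      = ∫ ω, ((c - m) ^ 2 - 2 * (c - m) * (f ω - m) + (f ω - m) ^ 2) ∂μ := by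
        congr with ω
        ring
    _ = ∫ _, (c - m) ^ 2 ∂μ - ∫ ω, 2 * (c - m) * (f ω - m) ∂μ + ∫ ω, (f ω - m) ^ 2 ∂μ := by
        rw [integral_add hlin_int hdev.integrable_sq,
          integral_sub (integrable_const _) hcross_int]
    _ = (c - m) ^ 2 * μ.real Set.univ + ∫ ω, (f ω - m) ^ 2 ∂μ := by
        rw [hcross, sub_zero, integral_const, smul_eq_mul, mul_comm]

theorem integral_sq_piecewise_const_sub {S : Set Ω} [DecidablePred (· ∈ S)] (hS : MeasurableSet S)
    (hμS : μ S ≠ ⊤) (hf : MemLp f 2 (μ.restrict S))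
    (hg : IntegrableOn (fun ω => (g ω - f ω) ^ 2) Sᶜ μ) (c : ℝ) :
    ∫ ω, (S.piecewise (fun _ => c) g ω - f ω) ^ 2 ∂μ
      = (c - ⨍ ω in S, f ω ∂μ) ^ 2 * μ.real S
        + (∫ ω in S, (f ω - ⨍ ω in S, f ω ∂μ) ^ 2 ∂μ + ∫ ω in Sᶜ, (g ω - f ω) ^ 2 ∂μ) := by
  have : IsFiniteMeasure (μ.restrict S) := isFiniteMeasure_restrict.mpr hμS
  have hc : IntegrableOn (fun ω => (c - f ω) ^ 2) S μ := ((memLp_const c).sub hf).integrable_sq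
  have hsplit : (fun ω => (S.piecewise (fun _ => c) g ω - f ω) ^ 2)
      = S.piecewise (fun ω => (c - f ω) ^ 2) (fun ω => (g ω - f ω) ^ 2) := by
    ext ω
    by_cases hω : ω ∈ S <;> simp [hω]
  rw [hsplit, integral_piecewise hS hc hg, integral_sq_const_sub_eq_bias_add_variance hf,
    measureReal_restrict_apply_univ, add_assoc]

end MeanSquare

theorem mul_indicator_compl_add_mul_indicator_eq_piecewise {X R : Type*} [NonAssocSemiring R]
    (B : Set X) [DecidablePred (· ∈ B)] (θ : X → R) (c : R) :
    (fun d => θ d * Bᶜ.indicator (fun _ => (1 : R)) d + c * B.indicator (fun _ => (1 : R)) d)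
      = B.piecewise (fun _ => c) θ := by
  ext d
  by_cases hd : d ∈ B <;> simp [hd]

section BayesRisk

variable {A D : Type*} [MeasurableSpace A] [MeasurableSpace D]

instance isFiniteMeasure_jointM (π : Measure A) [IsFiniteMeasure π] (Q : Kernel A D)
    [IsFiniteKernel Q] : IsFiniteMeasure (jointM π Q) :=
  inferInstanceAs (IsFiniteMeasure (π.compProd Q))

instance isFiniteMeasure_dataM (π : Measure A) [IsFiniteMeasure π] (Q : Kernel A D)
    [IsFiniteKernel Q] : IsFiniteMeasure (dataM π Q) :=
  inferInstanceAs (IsFiniteMeasure (π.bind Q))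

variable (π : Measure A) [SFinite π] (Q : Kernel A D) [IsSFiniteKernel Q]

theorem jointM_univ_prod {B : Set D} (hB : MeasurableSet B) :
    jointM π Q (Set.univ ×ˢ B) = dataM π Q B := by
  rw [Set.univ_prod, ← Measure.snd_apply hB]
  exact congrArg (· B) (Measure.snd_compProd π Q)

theorem bayesRisk_piecewise_const (Φ : A → ℝ) (θ : D → ℝ) {B : Set D} [DecidablePred (· ∈ B)]
    (hB : MeasurableSet B) (hBfin : dataM π Q B ≠ ⊤)
    (hΦ : MemLp (fun p : A × D => Φ p.1) 2 ((jointM π Q).restrict (Set.univ ×ˢ B)))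
    (hθ : IntegrableOn (fun p : A × D => (θ p.2 - Φ p.1) ^ 2) (Set.univ ×ˢ B)ᶜ (jointM π Q))
    (c : ℝ) :
    _root_.bayesRisk Q Φ (B.piecewise (fun _ => c) θ) π
      = (c - ⨍ p in Set.univ ×ˢ B, Φ p.1 ∂(jointM π Q)) ^ 2 * (dataM π Q B).toReal
        + (∫ p in Set.univ ×ˢ B,
              (Φ p.1 - ⨍ p in Set.univ ×ˢ B, Φ p.1 ∂(jointM π Q)) ^ 2 ∂(jointM π Q)
            + ∫ p in (Set.univ ×ˢ B)ᶜ, (θ p.2 - Φ p.1) ^ 2 ∂(jointM π Q)) := by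
  classical
  have hpull (p : A × D) : B.piecewise (fun _ => c) θ p.2
      = (Set.univ ×ˢ B : Set (A × D)).piecewise (fun _ => c) (fun p => θ p.2) p := by
    by_cases hp : p.2 ∈ B <;> simp [hp]
  rw [← jointM_univ_prod π Q hB] at hBfin ⊢
  simp only [_root_.bayesRisk, hpull]
  exact integral_sq_piecewise_const_sub (MeasurableSet.univ.prod hB) hBfin hΦ hθ c

end BayesRisk

theorem risk_difference_of_modified_estimators_general
    {A D : Type*} [MeasurableSpace A] [MeasurableSpace D]
    (Q : Kernel A D) [IsSFiniteKernel Q] (Φ : A → ℝ) (π : Measure A) [SFinite π] (θ : D → ℝ)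
    (B : Set D) (hB : MeasurableSet B) (hBfin : dataM π Q B ≠ ⊤)
    (hΦ : MemLp (fun p : A × D => Φ p.1) 2 ((jointM π Q).restrict (Set.univ ×ˢ B)))
    (hθ : IntegrableOn (fun p : A × D => (θ p.2 - Φ p.1) ^ 2) (Set.univ ×ˢ B)ᶜ (jointM π Q))
    (γ : ℝ)
    (hγ : γ = (1 / (dataM π Q B).toReal) * ∫ p in Set.univ ×ˢ B, Φ p.1 ∂(jointM π Q))
    (y z : ℝ) :
    _root_.bayesRisk Q Φ
        (fun d => θ d * Bᶜ.indicator (fun _ => (1 : ℝ)) d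
          + y * B.indicator (fun _ => (1 : ℝ)) d) π
      - _root_.bayesRisk Q Φ
        (fun d => θ d * Bᶜ.indicator (fun _ => (1 : ℝ)) d
          + z * B.indicator (fun _ => (1 : ℝ)) d) π
    = ((y - γ) ^ 2 - (z - γ) ^ 2) * (dataM π Q B).toReal := by
  classical
  have hmean : ⨍ p in Set.univ ×ˢ B, Φ p.1 ∂(jointM π Q) = γ := by
    rw [hγ, setAverage_eq, measureReal_def, jointM_univ_prod π Q hB, smul_eq_mul, one_div]
  simp only [mul_indicator_compl_add_mul_indicator_eq_piecewise,
    bayesRisk_piecewise_const π Q Φ θ hB hBfin hΦ hθ, hmean]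
  ring

/-- **Risk difference of modified estimators.** For `θ_y := θ·1_{Bᶜ} + y·1_B` with
`(π†·Q)(B) > 0` and `γ := E_{π†⊙Q}[Φ | d ∈ B]`, one has
`Er(θ_y, π†) − Er(θ_z, π†) = ((y − γ)² − (z − γ)²)·(π†·Q)(B)`. -/
theorem risk_difference_of_modified_estimators
    {A D : Type*} [MeasurableSpace A] [MeasurableSpace D] [Nonempty A] [Nonempty D]
    (Q : Kernel A D) [IsMarkovKernel Q]
    (Φ : A → ℝ) (hΦm : Measurable Φ) (hΦb : ∃ C, ∀ a, |Φ a| ≤ C)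
    (πd : Measure A) [IsProbabilityMeasure πd]
    (θ : D → ℝ) (hθm : Measurable θ) (hθb : ∃ C, ∀ d, |θ d| ≤ C)
    (B : Set D) (hB : MeasurableSet B) (hBpos : 0 < dataM πd Q B)
    (γ : ℝ)
    (hγ : γ = (1 / (dataM πd Q B).toReal) * ∫ p in Set.univ ×ˢ B, Φ p.1 ∂(jointM πd Q)) :
    ∀ y z : ℝ,
      bayesRisk Q Φ
          (fun d => θ d * Bᶜ.indicator (fun _ => (1 : ℝ)) d
            + y * B.indicator (fun _ => (1 : ℝ)) d) πd
        - bayesRisk Q Φ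
          (fun d => θ d * Bᶜ.indicator (fun _ => (1 : ℝ)) d
            + z * B.indicator (fun _ => (1 : ℝ)) d) πd
      = ((y - γ) ^ 2 - (z - γ) ^ 2) * (dataM πd Q B).toReal := by
  have hΦ : MemLp (fun p : A × D => Φ p.1) 2 (jointM πd Q) :=
    memLp_comp_of_bounded hΦm.stronglyMeasurable hΦb measurable_fst 2
  have hθ : MemLp (fun p : A × D => θ p.2) 2 (jointM πd Q) :=
    memLp_comp_of_bounded hθm.stronglyMeasurable hθb measurable_snd 2
  exact risk_difference_of_modified_estimators_general Q Φ πd θ B hB (measure_ne_top _ B)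
    (hΦ.restrict _) (hθ.sub hΦ).integrable_sq.integrableOn γ hγ
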